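/- Let K be a field, B = K[x_1,…,x_n] with n > 0, and φ: B → B a K-algebra automorphism. Then deg(φ^{-1}) ≤ deg(φ)^{n−1}. -/

import Mathlib

/-- The degree of a `K`-algebra endomorphism `φ` of the polynomial ring `K[x_1, …, x_n]`:
`deg(φ) = max {deg f_1, …, deg f_n}` where `f_i = φ(x_i)` and `deg` is total degree. -/
noncomputable def polyDeg {K : Type*} [CommSemiring K] {n : ℕ}
    (φ : MvPolynomial (Fin n) K →ₐ[K] MvPolynomial (Fin n) K) : ℕ :=
  Finset.univ.sup fun i : Fin n => (φ (MvPolynomial.X i)).totalDegree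

/-!
Write `k = n - 1`, `d = deg φ`, `g = φ⁻¹(x_i)` and `e = deg g`. Composing `φ` with the substitution
`x_i ↦ 0` gives a homomorphism onto a polynomial ring in `k` variables which multiplies degrees by
at most `d` and whose kernel is generated by `g`. A polynomial of degree at most `m + e` in this
kernel is `g` times a polynomial of degree at most `m`, so counting dimensions gives
`binom (m + e + k + 1) (k + 1) ≤ binom (m + k + 1) (k + 1) + binom (d * (m + e) + k) k`.
As `m → ∞`, the difference of the first two binomials grows at least like `e * m ^ k / k!` and the
last one like `d ^ k * m ^ k / k!`, whence `e ≤ d ^ k`.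
-/

open MvPolynomial

theorem choose_succ_add_mul_choose_le (n e k : ℕ) :
    n.choose (k + 1) + e * n.choose k ≤ (n + e).choose (k + 1) := by
  induction e with
  | zero => simp
  | succ e ih =>
    calc n.choose (k + 1) + (e + 1) * n.choose k
        = n.choose k + (n.choose (k + 1) + e * n.choose k) := by ring
      _ ≤ (n + e).choose k + (n + e).choose (k + 1) :=
        add_le_add (Nat.choose_le_choose k (Nat.le_add_right n e)) ih
      _ = (n + (e + 1)).choose (k + 1) := (Nat.choose_succ_succ (n + e) k).symm

theorem le_pow_of_forall_mul_pow_le {e d c k : ℕ}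
    (h : ∀ m : ℕ, e * m ^ k ≤ (d * m + c) ^ k) : e ≤ d ^ k := by
  have le_pow_add_div : ∀ m : ℕ, 0 < m → (e : ℝ) ≤ (d + c / m) ^ k := by
    intro m hm
    have hm' : (0 : ℝ) < m := Nat.cast_pos.2 hm
    have add_div_eq : (d + c / m : ℝ) = (d * m + c) / m := by field_simp
    rw [add_div_eq, div_pow, le_div_iff₀ (pow_pos hm' k)]
    exact_mod_cast h m
  have tendsto_pow : Filter.Tendsto (fun m : ℕ => (d + c / m : ℝ) ^ k) Filter.atTop
      (nhds ((d + 0 : ℝ) ^ k)) :=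
    ((tendsto_const_div_atTop_nhds_zero_nat (c : ℝ)).const_add (d : ℝ)).pow k
  have cast_le : (e : ℝ) ≤ (d + 0) ^ k :=
    ge_of_tendsto tendsto_pow ((Filter.eventually_gt_atTop 0).mono le_pow_add_div)
  rw [add_zero] at cast_le
  exact_mod_cast cast_le

theorem le_pow_of_forall_mul_choose_le {e d c k : ℕ}
    (h : ∀ m : ℕ, e * (m + k).choose k ≤ (d * m + c).choose k) : e ≤ d ^ k := by
  refine le_pow_of_forall_mul_pow_le (c := c) fun m => ?_
  have pow_le_descFactorial : m ^ k ≤ (m + k).descFactorial k :=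
    (Nat.pow_le_pow_left (by omega) k).trans (Nat.pow_sub_le_descFactorial (m + k) k)
  calc e * m ^ k ≤ e * (m + k).descFactorial k := Nat.mul_le_mul_left e pow_le_descFactorial
    _ = k.factorial * (e * (m + k).choose k) := by
      rw [Nat.descFactorial_eq_factorial_mul_choose]; ring
    _ ≤ k.factorial * (d * m + c).choose k := Nat.mul_le_mul_left _ (h m)
    _ = (d * m + c).descFactorial k := (Nat.descFactorial_eq_factorial_mul_choose _ _).symm
    _ ≤ (d * m + c) ^ k := Nat.descFactorial_le_pow _ _

section LinearAlgebra

universe u v w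

variable {R : Type u} {M : Type v} {N : Type w} [Ring R] [HasRankNullity.{v} R]
  [StrongRankCondition R] [AddCommGroup M] [Module R M] [AddCommGroup N] [Module R N]

theorem finrank_le_add_of_map_le_of_inf_ker_le (f : M →ₗ[R] N) {V U : Submodule R M}
    {W : Submodule R N} [Module.Finite R V] [Module.Finite R U] [Module.Finite R W]
    (hW : V.map f ≤ W) (hU : V ⊓ LinearMap.ker f ≤ U) :
    Module.finrank R V ≤ Module.finrank R U + Module.finrank R W := by
  set g := f.domRestrict V
  have finrank_ker_le : Module.finrank R (LinearMap.ker g) ≤ Module.finrank R U := by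
    rw [← Submodule.finrank_map_subtype_eq V (LinearMap.ker g), LinearMap.ker_domRestrict,
      Submodule.map_comap_subtype]
    exact Submodule.finrank_mono hU
  have finrank_range_le : Module.finrank R (LinearMap.range g) ≤ Module.finrank R W := by
    rw [LinearMap.range_domRestrict]
    exact Submodule.finrank_mono hW
  have rank_nullity := (LinearMap.ker g).finrank_quotient_add_finrank
  rw [g.quotKerEquivRange.finrank_eq] at rank_nullity
  omega

end LinearAlgebra

section Polynomials

variable {σ τ R : Type*}

theorem totalDegree_algHom_apply_le [CommSemiring R]
    (ψ : MvPolynomial σ R →ₐ[R] MvPolynomial τ R) {d : ℕ}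
    (hd : ∀ j, (ψ (X j)).totalDegree ≤ d) (p : MvPolynomial σ R) :
    (ψ p).totalDegree ≤ d * p.totalDegree := by
  have totalDegree_prod_le : ∀ s ∈ p.support,
      (∏ j ∈ s.support, ψ (X j) ^ s j).totalDegree ≤ d * p.totalDegree := fun s hs =>
    calc (∏ j ∈ s.support, ψ (X j) ^ s j).totalDegree
        ≤ ∑ j ∈ s.support, (ψ (X j) ^ s j).totalDegree := totalDegree_finsetProd _ _
      _ ≤ ∑ j ∈ s.support, d * s j := Finset.sum_le_sum fun j _ =>
        (totalDegree_pow _ _).trans (by rw [mul_comm]; exact Nat.mul_le_mul_right _ (hd j))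
      _ = d * ∑ j ∈ s.support, s j := (Finset.mul_sum _ _ _).symm
      _ ≤ d * p.totalDegree := Nat.mul_le_mul_left d (le_totalDegree hs)
  rw [aeval_unique ψ, aeval_def, eval₂_eq]
  refine totalDegree_finsetSum_le fun s hs => (totalDegree_mul _ _).trans ?_
  rw [algebraMap_eq, totalDegree_C, zero_add]
  exact totalDegree_prod_le s hs

theorem totalDegree_killCompl_le [CommSemiring R] {f : σ → τ} (hf : f.Injective)
    (p : MvPolynomial τ R) : (killCompl hf p).totalDegree ≤ p.totalDegree := by
  have totalDegree_X_le (j : τ) : (killCompl hf (X j : MvPolynomial τ R)).totalDegree ≤ 1 := by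
    rw [killCompl, aeval_X]
    split_ifs
    · exact (isHomogeneous_X R _).totalDegree_le
    · simp
  simpa using totalDegree_algHom_apply_le (killCompl hf) totalDegree_X_le p

theorem ker_killCompl [CommSemiring R] {f : σ → τ} (hf : f.Injective) :
    RingHom.ker (killCompl (R := R) hf) = Ideal.span (X '' (Set.range f)ᶜ) := by
  refine le_antisymm (fun p hp => ?_) (Ideal.span_le.2 ?_)
  · rw [mem_ideal_span_X_image]
    intro s hs
    by_contra! hrange
    have support_subset : (s.support : Set τ) ⊆ Set.range f := fun j hj => by
      by_contra hj'
      exact Finsupp.mem_support_iff.1 hj (hrange j hj')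
    rw [← Finsupp.mapDomain_comapDomain f hf s support_subset, mem_support_iff,
      ← coeff_killCompl hf, RingHom.mem_ker.1 hp, coeff_zero] at hs
    exact hs rfl
  · rintro _ ⟨j, hj, rfl⟩
    rw [SetLike.mem_coe, RingHom.mem_ker, killCompl, aeval_X, dif_neg hj]

theorem ker_killCompl_ne [CommSemiring R] (i : σ) :
    RingHom.ker (killCompl (R := R) (Subtype.val_injective (p := (· ≠ i)))) =
      Ideal.span {X i} := by
  have compl_range : (Set.range (Subtype.val : {j // j ≠ i} → σ))ᶜ = {i} := by
    ext j
    simp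
  rw [ker_killCompl, compl_range, Set.image_singleton]

theorem finrank_restrictTotalDegree (σ R : Type*) [Fintype σ] [CommSemiring R]
    [StrongRankCondition R] (m : ℕ) :
    Module.finrank R (restrictTotalDegree σ R m) =
      (m + Fintype.card σ).choose (Fintype.card σ) := by
  classical
  have setOf_sum_le : {s : σ →₀ ℕ | s.sum (fun _ e => e) ≤ m} =
      ((Finset.range (m + 1)).biUnion (Finset.finsuppAntidiag Finset.univ) :
        Finset (σ →₀ ℕ)) := by
    ext s
    simp [Finset.mem_finsuppAntidiag, Finsupp.sum_fintype]
  have pairwiseDisjoint : (Finset.range (m + 1) : Set ℕ).PairwiseDisjoint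
      (Finset.finsuppAntidiag (Finset.univ : Finset σ)) := by
    intro a _ b _ hab
    refine Finset.disjoint_left.2 fun s hsa hsb => hab ?_
    rw [Finset.mem_finsuppAntidiag] at hsa hsb
    exact hsa.1.symm.trans hsb.1
  rw [restrictTotalDegree, Module.finrank_eq_nat_card_basis (basisRestrictSupport R _),
    setOf_sum_le, SetLike.coe_sort_coe, Nat.card_eq_fintype_card, Fintype.card_coe,
    Finset.card_biUnion pairwiseDisjoint]
  simp only [Finset.card_finsuppAntidiag_nat_eq_multichoose, Finset.card_univ,
    Nat.sum_range_multichoose]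

theorem exists_totalDegree_le_mul_eq_of_dvd [CommSemiring R] [NoZeroDivisors R]
    {g p : MvPolynomial σ R} {m : ℕ} (hgp : g ∣ p) (hp : p.totalDegree ≤ m + g.totalDegree) :
    ∃ q : MvPolynomial σ R, q.totalDegree ≤ m ∧ g * q = p := by
  obtain ⟨q, rfl⟩ := hgp
  by_cases hgq : g * q = 0
  · exact ⟨0, by simp, by simp [hgq]⟩
  · rw [totalDegree_mul_of_isDomain (left_ne_zero_of_mul hgq) (right_ne_zero_of_mul hgq)] at hp
    exact ⟨q, by omega, rfl⟩

variable [CommRing R] [IsDomain R]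

theorem choose_le_choose_add_choose_of_ker_le_span [Fintype σ] [Fintype τ]
    (ψ : MvPolynomial σ R →ₐ[R] MvPolynomial τ R) {d : ℕ}
    (hd : ∀ j, (ψ (X j)).totalDegree ≤ d) {g : MvPolynomial σ R}
    (hg : RingHom.ker ψ ≤ Ideal.span {g}) (m : ℕ) :
    (m + g.totalDegree + Fintype.card σ).choose (Fintype.card σ) ≤
      (m + Fintype.card σ).choose (Fintype.card σ) +
        (d * (m + g.totalDegree) + Fintype.card τ).choose (Fintype.card τ) := by
  set V := restrictTotalDegree σ R (m + g.totalDegree)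
  set U := (restrictTotalDegree σ R m).map (LinearMap.mulLeft R g)
  set W := restrictTotalDegree τ R (d * (m + g.totalDegree))
  have map_le : V.map ψ.toLinearMap ≤ W := by
    rintro _ ⟨p, hp, rfl⟩
    rw [SetLike.mem_coe, mem_restrictTotalDegree] at hp
    exact (mem_restrictTotalDegree _ _ _).2
      ((totalDegree_algHom_apply_le ψ hd p).trans (Nat.mul_le_mul_left d hp))
  have inf_ker_le : V ⊓ LinearMap.ker ψ.toLinearMap ≤ U := by
    rintro p ⟨hp, hψp⟩
    have hgp : g ∣ p := Ideal.mem_span_singleton.1 (hg hψp)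
    obtain ⟨q, hq, rfl⟩ :=
      exists_totalDegree_le_mul_eq_of_dvd hgp ((mem_restrictTotalDegree _ _ _).1 hp)
    exact ⟨q, (mem_restrictTotalDegree _ _ _).2 hq, rfl⟩
  have finrank_le := finrank_le_add_of_map_le_of_inf_ker_le ψ.toLinearMap map_le inf_ker_le
  have finrank_U_le : Module.finrank R U ≤ Module.finrank R (restrictTotalDegree σ R m) :=
    Submodule.finrank_map_le _ _
  simp only [V, W, finrank_restrictTotalDegree] at finrank_le finrank_U_le
  omega

/-- Geometrically, `ψ` parametrises the hypersurface `g = 0`. -/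
theorem totalDegree_le_pow_of_ker_le_span [Fintype σ] [Fintype τ]
    (hcard : Fintype.card σ = Fintype.card τ + 1)
    (ψ : MvPolynomial σ R →ₐ[R] MvPolynomial τ R) {d : ℕ}
    (hd : ∀ j, (ψ (X j)).totalDegree ≤ d) {g : MvPolynomial σ R}
    (hg : RingHom.ker ψ ≤ Ideal.span {g}) : g.totalDegree ≤ d ^ Fintype.card τ := by
  set k := Fintype.card τ
  set e := g.totalDegree
  refine le_pow_of_forall_mul_choose_le (c := d * e + k) fun m => ?_
  have dimension_count := choose_le_choose_add_choose_of_ker_le_span ψ hd hg m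
  have binomial_growth := choose_succ_add_mul_choose_le (m + (k + 1)) e k
  rw [hcard, add_right_comm] at dimension_count
  calc e * (m + k).choose k ≤ e * (m + (k + 1)).choose k :=
        Nat.mul_le_mul_left e (Nat.choose_le_choose k (by omega))
    _ ≤ (d * (m + e) + k).choose k :=
      Nat.le_of_add_le_add_left (binomial_growth.trans dimension_count)
    _ = (d * m + (d * e + k)).choose k := by rw [mul_add, add_assoc]

theorem polynomial_automorphism_inverse_degree_bound_general [Fintype σ]
    (φ : MvPolynomial σ R ≃ₐ[R] MvPolynomial σ R) {d : ℕ}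
    (hd : ∀ j, (φ (X j)).totalDegree ≤ d) (i : σ) :
    (φ.symm (X i)).totalDegree ≤ d ^ (Fintype.card σ - 1) := by
  classical
  set π : MvPolynomial σ R →ₐ[R] MvPolynomial {j // j ≠ i} R := killCompl Subtype.val_injective
  have card_ne : Fintype.card {j // j ≠ i} = Fintype.card σ - 1 := Set.card_ne_eq i
  have card_eq : Fintype.card σ = Fintype.card {j // j ≠ i} + 1 := by
    have card_pos : 0 < Fintype.card σ := Fintype.card_pos_iff.2 ⟨i⟩
    omega
  have ker_le : RingHom.ker (π.comp φ.toAlgHom) ≤ Ideal.span {φ.symm (X i)} := by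
    intro p hp
    have X_dvd : X i ∣ φ p := by
      rw [← Ideal.mem_span_singleton, ← ker_killCompl_ne]
      exact hp
    rw [Ideal.mem_span_singleton]
    simpa only [AlgEquiv.symm_apply_apply] using map_dvd φ.symm X_dvd
  have totalDegree_le (j : σ) : (π.comp φ.toAlgHom (X j)).totalDegree ≤ d :=
    (totalDegree_killCompl_le Subtype.val_injective (φ (X j))).trans (hd j)
  rw [← card_ne]
  exact totalDegree_le_pow_of_ker_le_span card_eq (π.comp φ.toAlgHom) totalDegree_le ker_le

end Polynomials

/-- Let `K` be a field, `B = K[x_1, …, x_n]` with `n > 0`, and `φ : B → B`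
a `K`-algebra automorphism.  Then `deg(φ⁻¹) ≤ deg(φ)^{n−1}`. -/
theorem polynomial_automorphism_inverse_degree_bound (K : Type*) [Field K] (n : ℕ)
    (hn : 0 < n) (φ : MvPolynomial (Fin n) K ≃ₐ[K] MvPolynomial (Fin n) K) :
    polyDeg φ.symm.toAlgHom ≤ polyDeg φ.toAlgHom ^ (n - 1) := by
  have totalDegree_le (j : Fin n) : (φ (X j)).totalDegree ≤ polyDeg φ.toAlgHom :=
    Finset.le_sup (f := fun j => (φ (X j)).totalDegree) (Finset.mem_univ j)
  exact Finset.sup_le fun i _ => by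
    simpa using polynomial_automorphism_inverse_degree_bound_general φ totalDegree_le i
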